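/- arXiv:2302.09014 — 12 statements merged into one kernel-verified Lean document; each statement's English description precedes it below -/
import Mathlib

section
/- Let b and l be integers with r = b^2 - 8l > 225. If m, n, d are integers with d = 4m + bn, 1 ≤ d ≤ 15, and 4m^2 + 2bmn + 2ln^2 > 0, then n = 0 (so the lattice vector m·h1 + n·h2 is an integer multiple of h1). -/
theorem stmt_2 (b l m n d : ℤ) (hr : b ^ 2 - 8 * l > 225)
    (hd : d = 4 * m + b * n) (hd1 : 1 ≤ d) (hd15 : d ≤ 15)
    (hpos : 4 * m ^ 2 + 2 * b * m * n + 2 * l * n ^ 2 > 0) :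
    n = 0 := by
  by_contra hn
  have hn2 : 0 < n ^ 2 := by positivity
  -- Completing the square: `d ^ 2 - r * n ^ 2 = 4 * C ^ 2` for `C = m * h1 + n * h2`.
  have key : d ^ 2 - (b ^ 2 - 8 * l) * n ^ 2
      = 4 * (4 * m ^ 2 + 2 * b * m * n + 2 * l * n ^ 2) := by
    rw [hd]; ring
  have hd2 : d ^ 2 ≤ 225 := by nlinarith
  nlinarith
end

section
/- Let a, b, c be integers, Q = [[2a, b],[b, 2c]], and let τ be a 2×2 integer matrix with τ^T Q τ = Q, τ^2 = I, and τ ≠ ±I. Then: τ_{22} = -τ_{11}; det τ = -1; c·τ_{21} = a·τ_{12} - b·τ_{11}; and c·τ_{11}^2 - b·τ_{11}·τ_{12} + a·τ_{12}^2 = c. In particular, writing (α, β) = (τ_{11}, τ_{12}), the pair (α, β) satisfies c·α^2 - b·αβ + a·β^2 = c. -/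
/-! An involution `τ` of the lattice satisfies `τ⁻¹ = τ`, so the isometry condition
`τᵀ Q τ = Q` says that `τᵀ Q = Q τ`, i.e. that `Q τ` is symmetric; equality of its off-diagonal
entries is the linear relation between `τ₁₀`, `τ₀₁` and `τ₀₀`. The off-diagonal entries of
`τ² = 1` are multiples of the trace, so if the trace were nonzero `τ` would be diagonal with
equal entries `±1`; hence the trace vanishes. The determinant and the quadratic relation then
follow from `τ₀₀² + τ₀₁ τ₁₀ = 1`. -/

open Matrix

theorem stmt_6 (a b c : ℤ) (τ : Matrix (Fin 2) (Fin 2) ℤ)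
    (hiso : τᵀ * !![2 * a, b; b, 2 * c] * τ = !![2 * a, b; b, 2 * c])
    (hinv : τ * τ = 1) (hne1 : τ ≠ 1) (hne2 : τ ≠ -1) :
    τ 1 1 = -τ 0 0 ∧ τ.det = -1 ∧
    c * τ 1 0 = a * τ 0 1 - b * τ 0 0 ∧
    c * (τ 0 0) ^ 2 - b * (τ 0 0) * (τ 0 1) + a * (τ 0 1) ^ 2 = c := by
  have hsymm : τᵀ * !![2 * a, b; b, 2 * c] = !![2 * a, b; b, 2 * c] * τ := by
    calc τᵀ * !![2 * a, b; b, 2 * c]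
        = τᵀ * !![2 * a, b; b, 2 * c] * τ * τ := by
          rw [Matrix.mul_assoc _ τ τ, hinv, Matrix.mul_one]
      _ = _ := by rw [hiso]
  have h00 := congrFun (congrFun hinv 0) 0
  have h01 := congrFun (congrFun hinv 0) 1
  have h10 := congrFun (congrFun hinv 1) 0
  have h11 := congrFun (congrFun hinv 1) 1
  have hs := congrFun (congrFun hsymm 0) 1
  simp [Matrix.mul_apply, Fin.sum_univ_two] at h00 h01 h10 h11 hs
  have htr : τ 1 1 = -τ 0 0 := by
    by_contra h
    have hne : τ 0 0 + τ 1 1 ≠ 0 := fun h' => h (by linarith)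
    have hq : τ 0 1 = 0 :=
      (mul_eq_zero.mp (by linarith : τ 0 1 * (τ 0 0 + τ 1 1) = 0)).resolve_right hne
    have hr : τ 1 0 = 0 :=
      (mul_eq_zero.mp (by linarith : τ 1 0 * (τ 0 0 + τ 1 1) = 0)).resolve_right hne
    rw [hq, zero_mul, add_zero] at h00
    rw [hr, zero_mul, zero_add] at h11
    rcases mul_self_eq_one_iff.mp h00 with hp | hp <;>
      rcases mul_self_eq_one_iff.mp h11 with ht | ht
    · exact hne1 (by ext i j; fin_cases i <;> fin_cases j <;> simp [hp, hq, hr, ht])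
    · exact hne (by rw [hp, ht]; norm_num)
    · exact hne (by rw [hp, ht]; norm_num)
    · exact hne2 (by ext i j; fin_cases i <;> fin_cases j <;> simp [hp, hq, hr, ht])
  rw [htr] at hs
  have hlin : c * τ 1 0 = a * τ 0 1 - b * τ 0 0 := by linarith
  refine ⟨htr, ?_, hlin, ?_⟩
  · rw [Matrix.det_fin_two, htr]
    linarith
  · linear_combination c * h00 - τ 0 1 * hlin
end

section
/- For every integer n ≥ 2, the matrix σ_n = [[2n^2-1, 2n^3-2n],[-2n, -2n^2+1]] satisfies: σ_n^T Q_n σ_n = Q_n; σ_n^2 = I; σ_n ≠ ±I; and the rational matrix (σ_n + I)·Q_n^{-1} has all entries in ℤ. -/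
open Matrix

/-! The integrality claim holds because `σ + 1 = M * Q` with the integer matrix
`M = !![n ^ 2, -n; -n, 1]`. Since `det Q = 8 - 4 * n ^ 2` is nonzero, `Q` can be cancelled, so
`(σ + 1) * Q⁻¹ = M`. The other claims are entrywise polynomial identities in `n`, together with
the off-diagonal entry `-2 * n ≠ 0` of `σ`. -/

theorem stmt_8 (n : ℤ) (hn : 2 ≤ n) :
    let Q : Matrix (Fin 2) (Fin 2) ℤ := !![4, 2 * n; 2 * n, 2]
    let σ : Matrix (Fin 2) (Fin 2) ℤ :=
      !![2 * n ^ 2 - 1, 2 * n ^ 3 - 2 * n; -2 * n, -2 * n ^ 2 + 1]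
    σᵀ * Q * σ = Q ∧ σ * σ = 1 ∧ σ ≠ 1 ∧ σ ≠ -1 ∧
      ∀ i j, ∃ z : ℤ,
        ((σ.map (Int.cast : ℤ → ℚ) + 1) * (Q.map (Int.cast : ℤ → ℚ))⁻¹) i j = (z : ℚ) := by
  intro Q σ
  refine ⟨?_, ?_, ?_, ?_, ?_⟩
  · ext i j
    fin_cases i <;> fin_cases j <;> simp [Q, σ, Matrix.mul_apply, Fin.sum_univ_two] <;> ring
  · ext i j
    fin_cases i <;> fin_cases j <;> simp [σ, Matrix.mul_apply, Fin.sum_univ_two] <;> ring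
  · intro h
    have h10 := congrFun (congrFun h 1) 0
    simp [σ] at h10
    omega
  · intro h
    have h10 := congrFun (congrFun h 1) 0
    simp [σ] at h10
    omega
  · let M : Matrix (Fin 2) (Fin 2) ℤ := !![n ^ 2, -n; -n, 1]
    have hdet : IsUnit (Q.map (Int.cast : ℤ → ℚ)).det := by
      have hn' : (2 : ℚ) ≤ n := by exact_mod_cast hn
      rw [isUnit_iff_ne_zero, Matrix.det_fin_two]
      simp only [Q, Matrix.map_apply, Matrix.of_apply, Matrix.cons_val', Matrix.cons_val_zero,
        Matrix.cons_val_one, Matrix.cons_val_fin_one]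
      push_cast
      nlinarith
    have hM : σ.map (Int.cast : ℤ → ℚ) + 1 =
        M.map (Int.cast : ℤ → ℚ) * Q.map (Int.cast : ℤ → ℚ) := by
      ext i j
      fin_cases i <;> fin_cases j <;>
        simp [M, Q, σ, Matrix.mul_apply, Fin.sum_univ_two] <;> ring
    intro i j
    exact ⟨M i j, by rw [hM, Matrix.mul_nonsing_inv_cancel_right _ _ hdet, Matrix.map_apply]⟩
end

section
/- For every integer n ≥ 2, the matrix τ_n = [[8n^6-20n^4+12n^2-1, 8n^7-24n^5+20n^3-4n],[-8n^5+16n^3-6n, -8n^6+20n^4-12n^2+1]] satisfies: τ_n^T Q_n τ_n = Q_n; τ_n^2 = I; τ_n ≠ ±I; and the rational matrix (τ_n + I)·Q_n^{-1} has all entries in ℤ. -/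
/-!
With `v = (2n³ - 2n, 1 - 2n²)` one has `vᵀ Q v = 2` and `τ = v vᵀ Q - 1`: thus `-τ` is the
reflection `x ↦ x - (vᵀ Q x) v` of the lattice in the vector `v` of square `2`, which makes `τ` an
isometry and an involution. Moreover `(τ + 1) Q⁻¹ = v vᵀ` is integral, because
`det Q = 8 - 4n² ≠ 0`. Finally `τ` has trace `0`, whereas `±1` has trace `±2`.
-/

open Matrix

theorem stmt_9 (n : ℤ) (hn : 2 ≤ n) :
    let Q : Matrix (Fin 2) (Fin 2) ℤ := !![4, 2 * n; 2 * n, 2]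
    let τ : Matrix (Fin 2) (Fin 2) ℤ :=
      !![8 * n ^ 6 - 20 * n ^ 4 + 12 * n ^ 2 - 1, 8 * n ^ 7 - 24 * n ^ 5 + 20 * n ^ 3 - 4 * n;
         -8 * n ^ 5 + 16 * n ^ 3 - 6 * n, -8 * n ^ 6 + 20 * n ^ 4 - 12 * n ^ 2 + 1]
    τᵀ * Q * τ = Q ∧ τ * τ = 1 ∧ τ ≠ 1 ∧ τ ≠ -1 ∧
      ∀ i j, ∃ z : ℤ,
        ((τ.map (Int.cast : ℤ → ℚ) + 1) * (Q.map (Int.cast : ℤ → ℚ))⁻¹) i j = (z : ℚ) := by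
  intro Q τ
  have htr : τ 0 0 + τ 1 1 = 0 := by simp [τ]
  refine ⟨?_, ?_, ?_, ?_, ?_⟩
  · ext i j
    fin_cases i <;> fin_cases j <;> simp [Q, τ, Matrix.mul_apply, Fin.sum_univ_two] <;> ring
  · ext i j
    fin_cases i <;> fin_cases j <;> simp [τ, Matrix.mul_apply, Fin.sum_univ_two] <;> ring
  · intro h
    simp [h] at htr
  · intro h
    simp [h] at htr
  · -- The rank-one matrix `v vᵀ`.
    let M : Matrix (Fin 2) (Fin 2) ℤ :=
      !![(2 * n ^ 3 - 2 * n) ^ 2, (2 * n ^ 3 - 2 * n) * (1 - 2 * n ^ 2);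
         (2 * n ^ 3 - 2 * n) * (1 - 2 * n ^ 2), (1 - 2 * n ^ 2) ^ 2]
    have hM : τ.map (Int.cast : ℤ → ℚ) + 1
        = M.map (Int.cast : ℤ → ℚ) * Q.map (Int.cast : ℤ → ℚ) := by
      ext i j
      fin_cases i <;> fin_cases j <;>
        simp [Q, τ, M, Matrix.mul_apply, Fin.sum_univ_two] <;> ring
    have hdet : IsUnit (Q.map (Int.cast : ℤ → ℚ)).det := by
      have hn' : (2 : ℚ) ≤ n := by exact_mod_cast hn
      rw [isUnit_iff_ne_zero, Matrix.det_fin_two]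
      simp only [Q, Matrix.map_apply, Matrix.of_apply, Matrix.cons_val', Matrix.cons_val_zero,
        Matrix.cons_val_one, Matrix.cons_val_fin_one]
      push_cast
      nlinarith
    intro i j
    refine ⟨M i j, ?_⟩
    rw [hM, Matrix.mul_nonsing_inv_cancel_right _ _ hdet, Matrix.map_apply]
end

section
/- For every integer n ≥ 2, with h_n = [[2n^2-1, n],[-2n, -1]]: the rational matrix (h_n - I)·Q_n^{-1} does NOT have all entries in ℤ, while the rational matrix (h_n^2 - I)·Q_n^{-1} has all entries in ℤ. -/
/-!
Write `Q` and `h` for the two matrices. Since `n ^ 2 ≠ 2`, the matrix `Q` is invertible over `ℚ`, so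
`M * Q⁻¹ = Z` as soon as `M = Z * Q`. The quotients are
`(h - 1) * Q⁻¹ = !![-1/2, n; 0, -1]`, whose top left entry is not an integer, and
`(h ^ 2 - 1) * Q⁻¹ = (h + 1) * !![-1/2, n; 0, -1] = !![-n ^ 2, 2 * n ^ 3 - n; n, -2 * n ^ 2]`.
-/

open Matrix

theorem stmt_11 (n : ℤ) (hn : 2 ≤ n) :
    let Q : Matrix (Fin 2) (Fin 2) ℤ := !![4, 2 * n; 2 * n, 2]
    let h : Matrix (Fin 2) (Fin 2) ℤ := !![2 * n ^ 2 - 1, n; -2 * n, -1]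
    (¬ ∀ i j, ∃ z : ℤ,
        ((h.map (Int.cast : ℤ → ℚ) - 1) * (Q.map (Int.cast : ℤ → ℚ))⁻¹) i j = (z : ℚ)) ∧
      ∀ i j, ∃ z : ℤ,
        (((h * h).map (Int.cast : ℤ → ℚ) - 1) * (Q.map (Int.cast : ℤ → ℚ))⁻¹) i j = (z : ℚ) := by
  intro Q h
  have hdet : IsUnit (Q.map (Int.cast : ℤ → ℚ)).det := by
    have hn' : (2 : ℚ) ≤ n := by exact_mod_cast hn
    rw [isUnit_iff_ne_zero]
    simp only [Q, det_fin_two, map_apply, of_apply, cons_val', cons_val_zero, cons_val_one,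
      cons_val_fin_one]
    push_cast
    nlinarith
  have h₁ : h.map (Int.cast : ℤ → ℚ) - 1 =
      !![-1 / 2, (n : ℚ); 0, -1] * Q.map (Int.cast : ℤ → ℚ) := by
    ext i j
    fin_cases i <;> fin_cases j <;> simp [Q, h, mul_apply, Fin.sum_univ_two] <;> ring
  have h₂ : (h * h).map (Int.cast : ℤ → ℚ) - 1 =
      (!![-n ^ 2, 2 * n ^ 3 - n; n, -2 * n ^ 2] : Matrix (Fin 2) (Fin 2) ℤ).map
        (Int.cast : ℤ → ℚ) * Q.map (Int.cast : ℤ → ℚ) := by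
    ext i j
    fin_cases i <;> fin_cases j <;> simp [Q, h, mul_apply, Fin.sum_univ_two] <;> ring
  rw [h₁, h₂, mul_nonsing_inv_cancel_right _ _ hdet, mul_nonsing_inv_cancel_right _ _ hdet]
  refine ⟨fun H => ?_, fun i j => ⟨_, rfl⟩⟩
  obtain ⟨z, hz⟩ := H 0 0
  have hz' : (-1 / 2 : ℚ) = z := hz
  have h2z : (-1 : ℤ) = 2 * z := by
    have : (-1 : ℚ) = 2 * z := by linarith
    exact_mod_cast this
  omega
end

section
/- For every integer n ≥ 2: (2n^2-2)^2 - 4(n^2-2)·n^2 = 4, and for all positive integers x, y with x^2 - 4(n^2-2)·y^2 = 4 one has y ≥ n and x ≥ 2n^2 - 2. In other words, (2n^2-2, n) is the minimal positive integer solution of the Pell equation x^2 - 4(n^2-2)y^2 = 4. -/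
/-!
Any solution has `x = 2 * a` with `a ^ 2 - (n ^ 2 - 2) * y ^ 2 = 1`. Since
`a ^ 2 = (n * y) ^ 2 - (2 * y ^ 2 - 1) < (n * y) ^ 2`, one can write `a = n * y - k` with `k ≥ 1`,
and then `k * (n * y + a) = 2 * y ^ 2 - 1`. If `y < n`, this gives `k * n < 2 * y < 2 * n`, so
`k = 1`; but `k = 1` forces `y = n`. Hence `y ≥ n`, and the bound on `x` follows
because `x` increases with `y` along the curve.
-/

theorem stmt_12 (n : ℤ) (hn : 2 ≤ n) :
    (2 * n ^ 2 - 2) ^ 2 - 4 * (n ^ 2 - 2) * n ^ 2 = 4 ∧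
      ∀ x y : ℤ, 0 < x → 0 < y → x ^ 2 - 4 * (n ^ 2 - 2) * y ^ 2 = 4 →
        n ≤ y ∧ 2 * n ^ 2 - 2 ≤ x := by
  refine ⟨by ring, fun x y hx hy h => ?_⟩
  have hny : n ≤ y := by
    by_contra! hlt
    have hev : Even (x ^ 2) := ⟨2 * (n ^ 2 - 2) * y ^ 2 + 2, by linarith⟩
    obtain ⟨a, rfl⟩ := (Int.even_pow.1 hev).1
    have ha : 0 < a := by linarith
    obtain ⟨k, hk⟩ : ∃ k, k = n * y - a := ⟨_, rfl⟩
    have hfac : k * (n * y + a) = 2 * y ^ 2 - 1 := by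
      subst hk
      linarith
    have hnypos : 0 < n * y := by positivity
    have hkpos : 0 < k := by
      refine pos_of_mul_pos_left (b := n * y + a) ?_ (by linarith)
      rw [hfac]
      nlinarith
    have hkn : k * n < 2 * y := by
      refine lt_of_mul_lt_mul_right (a := y) ?_ hy.le
      nlinarith [mul_pos hkpos ha]
    have hk1 : k = 1 := by
      have : k < 2 := lt_of_mul_lt_mul_right (a := n) (by linarith) (by linarith)
      omega
    have hyn : y * (n - y) = 0 := by
      have : a = n * y - 1 := by linarith
      rw [hk1, this] at hfac
      linarith
    have : 0 < y * (n - y) := mul_pos hy (by linarith)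
    linarith
  refine ⟨hny, ?_⟩
  refine le_of_abs_le (abs_le_of_sq_le_sq ?_ hx.le)
  have h1 : n ^ 2 ≤ y ^ 2 := by gcongr
  have h2 : 0 ≤ n ^ 2 - 2 := by nlinarith
  nlinarith [mul_le_mul_of_nonneg_left h1 h2]
end

section
/- For all integers n ≥ 2 and all integers y with 1 ≤ y ≤ n - 1, the number (n^2 - 2)·y^2 + 1 is not a perfect square. -/
theorem stmt_13 (n y : ℤ) (hn : 2 ≤ n) (hy1 : 1 ≤ y) (hy2 : y ≤ n - 1) :
    ¬ ∃ w : ℤ, (n ^ 2 - 2) * y ^ 2 + 1 = w ^ 2 := by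
  rintro ⟨w, hw⟩
  -- The value lies strictly between the consecutive squares `(n * y - 1) ^ 2` and `(n * y) ^ 2`.
  have hlt : w ^ 2 < (n * y) ^ 2 := by nlinarith
  have hgt : (n * y - 1) ^ 2 < w ^ 2 := by
    have : 0 < y * (n - y) := mul_pos (by linarith) (by linarith)
    nlinarith
  have hny : 0 < n * y := mul_pos (by linarith) (by linarith)
  have h1 : |w| < n * y := abs_lt_of_sq_lt_sq hlt hny.le
  have h2 : n * y - 1 < |w| := lt_of_pow_lt_pow_left₀ 2 (abs_nonneg w) (by rwa [sq_abs])
  linarith [Int.add_one_le_iff.mpr h2]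
end

section
/- For every integer n ≥ 2, with σ_n = [[2n^2-1, 2n^3-2n],[-2n, -2n^2+1]]: a vector v ∈ ℤ^2 satisfies σ_n·v = v if and only if v = λ·(-n, 1) for some integer λ; and for v = λ·(-n, 1) one has v^T Q_n v = 2λ^2. In particular, there is no v ∈ ℤ^2 with σ_n·v = v and v^T Q_n v = 4. -/
/-! Both eigenvector equations for `σ` are multiples of `x + n * y = 0`, so the fixed lattice is
spanned by `(-n, 1)`. This generator has norm `4 * n ^ 2 - 4 * n ^ 2 + 2 = 2`, so fixed vectors have
norm `2 * lam ^ 2`, and the value `4` would make `2` a perfect square. -/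

open Matrix

theorem stmt_14 (n : ℤ) (hn : 2 ≤ n) :
    let Q : Matrix (Fin 2) (Fin 2) ℤ := !![4, 2 * n; 2 * n, 2]
    let σ : Matrix (Fin 2) (Fin 2) ℤ :=
      !![2 * n ^ 2 - 1, 2 * n ^ 3 - 2 * n; -2 * n, -2 * n ^ 2 + 1]
    (∀ v : Fin 2 → ℤ, σ *ᵥ v = v ↔ ∃ lam : ℤ, v = lam • ![-n, 1]) ∧
    (∀ lam : ℤ, (lam • ![-n, 1]) ⬝ᵥ (Q *ᵥ (lam • ![-n, 1])) = 2 * lam ^ 2) ∧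
    ¬ ∃ v : Fin 2 → ℤ, σ *ᵥ v = v ∧ v ⬝ᵥ (Q *ᵥ v) = 4 := by
  intro Q σ
  have hfix : ∀ v : Fin 2 → ℤ, σ *ᵥ v = v ↔ ∃ lam : ℤ, v = lam • ![-n, 1] := by
    intro v
    constructor
    · intro h
      -- The second row of `σ v = v` reads `-2n (v 0 + n * v 1) = 0`, and `n ≠ 0`.
      have h1 := congrFun h 1
      simp only [σ, mulVec, dotProduct, Fin.sum_univ_two, of_apply, cons_val_zero,
        cons_val_one] at h1
      have h2 : n * (v 0 + n * v 1) = 0 := by linarith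
      have h3 : v 0 + n * v 1 = 0 := (mul_eq_zero.mp h2).resolve_left (by omega)
      refine ⟨v 1, ?_⟩
      ext i
      fin_cases i
      · simp
        linarith
      · simp
    · rintro ⟨lam, rfl⟩
      ext i
      fin_cases i <;> simp [σ, mulVec, dotProduct, Fin.sum_univ_two] <;> ring
  have hnorm : ∀ lam : ℤ,
      (lam • ![-n, 1]) ⬝ᵥ (Q *ᵥ (lam • ![-n, 1])) = 2 * lam ^ 2 := by
    intro lam
    simp [Q, mulVec, dotProduct, Fin.sum_univ_two]
    ring
  refine ⟨hfix, hnorm, ?_⟩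
  rintro ⟨v, hv, h4⟩
  obtain ⟨lam, rfl⟩ := (hfix v).mp hv
  rw [hnorm] at h4
  -- A fixed vector of norm 4 would give `lam ^ 2 = 2`, which has no integer solution.
  have hlt : lam < 2 := by nlinarith
  have hgt : -2 < lam := by nlinarith
  interval_cases lam <;> omega
end

section
/- For every integer n ≥ 2, with τ_n = [[8n^6-20n^4+12n^2-1, 8n^7-24n^5+20n^3-4n],[-8n^5+16n^3-6n, -8n^6+20n^4-12n^2+1]]: a vector v ∈ ℤ^2 satisfies τ_n·v = v if and only if v = λ·(-2n^3+2n, 2n^2-1) for some integer λ; and for v = λ·(-2n^3+2n, 2n^2-1) one has v^T Q_n v = 2λ^2. In particular, there is no v ∈ ℤ^2 with τ_n·v = v and v^T Q_n v = 4. -/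
/-!
Write `a = 2n² - 1`, `b = 2n³ - 2n` and `P = 2n⁴ - 4n² + 1`. The first row of `τ - 1` is
`2P · (a, b)`, and `P` is odd, hence nonzero, so a fixed vector `(x, y)` satisfies `a x + b y = 0`.
The Bézout identity `a² - 2n b = 1` makes `a` and `b` coprime, so `(x, y)` is an integer multiple of
`(-b, a)`, the multiplier being `2n x + a y`; conversely `(-b, a)` is fixed by `τ`. The form `Q`
takes the value `2` on `(-b, a)`, so fixed vectors have norm `2λ²`, and `2λ² = 4` has no integer
solution.
-/

open Matrix

theorem stmt_15 (n : ℤ) (hn : 2 ≤ n) :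
    let Q : Matrix (Fin 2) (Fin 2) ℤ := !![4, 2 * n; 2 * n, 2]
    let τ : Matrix (Fin 2) (Fin 2) ℤ :=
      !![8 * n ^ 6 - 20 * n ^ 4 + 12 * n ^ 2 - 1, 8 * n ^ 7 - 24 * n ^ 5 + 20 * n ^ 3 - 4 * n;
         -8 * n ^ 5 + 16 * n ^ 3 - 6 * n, -8 * n ^ 6 + 20 * n ^ 4 - 12 * n ^ 2 + 1]
    (∀ v : Fin 2 → ℤ, τ *ᵥ v = v ↔ ∃ lam : ℤ, v = lam • ![-2 * n ^ 3 + 2 * n, 2 * n ^ 2 - 1]) ∧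
    (∀ lam : ℤ, (lam • ![-2 * n ^ 3 + 2 * n, 2 * n ^ 2 - 1]) ⬝ᵥ
        (Q *ᵥ (lam • ![-2 * n ^ 3 + 2 * n, 2 * n ^ 2 - 1])) = 2 * lam ^ 2) ∧
    ¬ ∃ v : Fin 2 → ℤ, τ *ᵥ v = v ∧ v ⬝ᵥ (Q *ᵥ v) = 4 := by
  intro Q τ
  have hfix : ∀ v : Fin 2 → ℤ, τ *ᵥ v = v ↔
      ∃ lam : ℤ, v = lam • ![-2 * n ^ 3 + 2 * n, 2 * n ^ 2 - 1] := by
    intro v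
    constructor
    · intro h
      have h0 := congrFun h 0
      simp [τ, Matrix.mulVec, dotProduct, Fin.sum_univ_two] at h0
      have hP : 2 * n ^ 4 - 4 * n ^ 2 + 1 ≠ 0 := by
        intro h'
        omega
      have hrow : (2 * n ^ 4 - 4 * n ^ 2 + 1) *
          ((2 * n ^ 2 - 1) * v 0 + (2 * n ^ 3 - 2 * n) * v 1) = 0 := by
        linarith
      have hlin := (mul_eq_zero.mp hrow).resolve_left hP
      refine ⟨2 * n * v 0 + (2 * n ^ 2 - 1) * v 1, ?_⟩
      ext i
      fin_cases i
      · simp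
        linear_combination (2 * n ^ 2 - 1) * hlin
      · simp
        linear_combination (-(2 * n)) * hlin
    · rintro ⟨lam, rfl⟩
      ext i
      fin_cases i <;> simp [τ, Matrix.mulVec, dotProduct, Fin.sum_univ_two] <;> ring
  have hnorm : ∀ lam : ℤ, (lam • ![-2 * n ^ 3 + 2 * n, 2 * n ^ 2 - 1]) ⬝ᵥ
      (Q *ᵥ (lam • ![-2 * n ^ 3 + 2 * n, 2 * n ^ 2 - 1])) = 2 * lam ^ 2 := by
    intro lam
    simp [Q, Matrix.mulVec, dotProduct, Fin.sum_univ_two]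
    ring
  refine ⟨hfix, hnorm, ?_⟩
  rintro ⟨v, hv, h4⟩
  obtain ⟨lam, rfl⟩ := (hfix v).mp hv
  rw [hnorm] at h4
  have h1 : lam < 2 := by nlinarith
  have h2 : -2 < lam := by nlinarith
  interval_cases lam <;> omega
end

section
/- The equation z^2 - 248·β^2 = -8 has no solution in integers z, β. -/
theorem stmt_16 : ¬ ∃ z β : ℤ, z ^ 2 - 248 * β ^ 2 = -8 := by
  rintro ⟨z, β, h⟩
  -- The obstruction is 2-adic: `4 ∣ z`, and `z = 4 * w` turns the equation into
  -- `2 * w ^ 2 = 31 * β ^ 2 - 1`. So `β` is odd, whence `w ^ 2 ≡ 3 [ZMOD 4]`.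
  have hz : Even z := by
    have : Even (z ^ 2) := ⟨124 * β ^ 2 - 4, by linarith⟩
    exact (Int.even_pow.1 this).1
  obtain ⟨a, rfl⟩ := hz
  have ha : Even a := by
    have : Even (a ^ 2) := ⟨31 * β ^ 2 - 1, by linarith⟩
    exact (Int.even_pow.1 this).1
  obtain ⟨w, rfl⟩ := ha
  have hw : 2 * w ^ 2 = 31 * β ^ 2 - 1 := by linarith
  obtain ⟨k, rfl⟩ : Odd β := by
    have : Odd (β ^ 2) := ⟨w ^ 2 - 15 * β ^ 2, by linarith⟩
    exact (Int.odd_pow.1 this).resolve_right two_ne_zero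
  have hk : w ^ 2 = 62 * (k * (k + 1)) + 15 := by linarith
  obtain ⟨c, hc⟩ := Int.even_mul_succ_self k
  rw [hc] at hk
  have h4 : w ^ 2 % 4 = 3 := by omega
  rcases Int.even_or_odd w with hw' | hw'
  · obtain ⟨m, rfl⟩ := hw'
    have : (m + m) ^ 2 = 4 * m ^ 2 := by ring
    omega
  · have := Int.sq_mod_four_eq_one_of_odd hw'
    omega
end

section
/- The integral quadratic form q(m, k) = 4m^2 + 32mk + 2k^2 satisfies: q(m, k) ≠ 0 for every pair of integers (m, k) ≠ (0, 0), and q(m, k) ≠ -2 for every pair of integers (m, k). -/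
/-!
Completing the square gives `4m² + 32mk + 2k² = 2(x² - 62m²)` with `x = k + 8m`.
Since `62` is not a square, `x² = 62m²` forces `x = m = 0`. Since `31 ∣ 62` and `31 ≡ 3 mod 4`,
`-1` is not a square modulo `31`, so `x² - 62m² = -1` has no integer solution.
-/

theorem stmt_18 :
    (∀ m k : ℤ, (m, k) ≠ (0, 0) → 4 * m ^ 2 + 32 * m * k + 2 * k ^ 2 ≠ 0) ∧
      ∀ m k : ℤ, 4 * m ^ 2 + 32 * m * k + 2 * k ^ 2 ≠ -2 := by
  constructor
  · intro m k hne h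
    haveI : Zsqrtd.Nonsquare 62 := ⟨fun n hn => by
      have : n < 8 := by nlinarith
      interval_cases n <;> omega⟩
    have hsq : (k + 8 * m) * (k + 8 * m) = ((62 : ℕ) : ℤ) * m * m := by
      push_cast
      linarith
    obtain ⟨hx, hm⟩ := Zsqrtd.divides_sq_eq_zero_z hsq
    exact hne (Prod.ext hm (by simp only; omega))
  · intro m k h
    have hsq : (k + 8 * m) ^ 2 = 31 * (2 * m ^ 2) - 1 := by linarith
    have hmod : ((k + 8 * m : ℤ) : ZMod 31) ^ 2 = -1 := by
      rw [← Int.cast_pow, hsq]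
      push_cast
      rw [show (31 : ZMod 31) = 0 from rfl]
      ring
    have hnot : ∀ a : ZMod 31, a ^ 2 ≠ -1 := by decide
    exact hnot _ hmod
end

section
/- For every integer n ≥ 2, every 2×2 integer matrix g with g^T Q_n g = Q_n and det g = 1 is of the form g = h_n^k or g = -h_n^k for some integer k, where h_n = [[2n^2-1, n],[-2n, -1]]. -/
/-!
The proper isometries of `Q_n` are the matrices `x + y M` with `M = !![n, 1; -2, -n]`,
`M ^ 2 = n ^ 2 - 2`, and determinant `x ^ 2 - (n ^ 2 - 2) y ^ 2 = 1`: the shape follows by comparing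
`Q_n g` with `(adj g)ᵀ Q_n`. Hence they form the image of the group of solutions of the Pell equation
for `d = n ^ 2 - 2` under a multiplicative map (`pellToMatrix`) sending `(n ^ 2 - 1, n)` to `h_n`.
That solution is fundamental (`pellGen_isFundamental`): for `0 < y < n` the number
`(n ^ 2 - 2) y ^ 2 + 1` lies strictly between `(n y - 1) ^ 2` and `(n y) ^ 2`, so it is no square.
Mathlib's structure theorem for Pell solutions then gives the claim.
-/

open Matrix

/-- The solution `(n ^ 2 - 1, n)` of `x ^ 2 - (n ^ 2 - 2) y ^ 2 = 1`. Doubling the first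
coordinate gives the solution `(2 n ^ 2 - 2, n)` of `x ^ 2 - (4 n ^ 2 - 8) y ^ 2 = 4`. -/
def pellGen (n : ℤ) : Pell.Solution₁ (n ^ 2 - 2) :=
  Pell.Solution₁.mk (n ^ 2 - 1) n (by ring)

/-- The representation `x + y √d ↦ x + y M` of the Pell solutions for `d = n ^ 2 - 2`, where
`M = !![n, 1; -2, -n]` is a square root of `d`. -/
def pellToMatrix (n : ℤ) : Pell.Solution₁ (n ^ 2 - 2) →* Matrix (Fin 2) (Fin 2) ℤ where
  toFun a := !![a.x + n * a.y, a.y; -2 * a.y, a.x - n * a.y]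
  map_one' := by
    ext i j
    fin_cases i <;> fin_cases j <;> simp
  map_mul' a b := by
    ext i j
    fin_cases i <;> fin_cases j <;>
      simp [Matrix.mul_apply, Fin.sum_univ_two, Pell.Solution₁.x_mul, Pell.Solution₁.y_mul] <;> ring

theorem pellToMatrix_apply (n : ℤ) (a : Pell.Solution₁ (n ^ 2 - 2)) :
    pellToMatrix n a = !![a.x + n * a.y, a.y; -2 * a.y, a.x - n * a.y] := rfl

theorem pellToMatrix_neg (n : ℤ) (a : Pell.Solution₁ (n ^ 2 - 2)) :
    pellToMatrix n (-a) = -pellToMatrix n a := by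
  ext i j
  fin_cases i <;> fin_cases j <;> simp [pellToMatrix_apply] <;> ring

/-- Compatibility with integer powers, where negative powers of a matrix are those of its
nonsingular inverse. -/
theorem pellToMatrix_zpow (n : ℤ) (a : Pell.Solution₁ (n ^ 2 - 2)) (k : ℤ) :
    pellToMatrix n (a ^ k) = pellToMatrix n a ^ k := by
  refine map_zpow' (pellToMatrix n) (fun b => ?_) a k
  refine (Matrix.inv_eq_left_inv ?_).symm
  rw [← map_mul, inv_mul_cancel, map_one]

theorem pellToMatrix_pellGen (n : ℤ) :
    pellToMatrix n (pellGen n) = !![2 * n ^ 2 - 1, n; -2 * n, -1] := by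
  ext i j
  fin_cases i <;> fin_cases j <;> simp [pellToMatrix_apply, pellGen] <;> ring

theorem pellGen_isFundamental (n : ℤ) (hn : 2 ≤ n) : Pell.IsFundamental (pellGen n) := by
  refine ⟨?_, ?_, fun {a} ha => ?_⟩
  · simp only [pellGen, Pell.Solution₁.x_mk]
    nlinarith
  · simp only [pellGen, Pell.Solution₁.y_mk]
    linarith
  · simp only [pellGen, Pell.Solution₁.x_mk]
    have hp := a.prop
    set x := a.x
    obtain ⟨u, hu, hu0⟩ : ∃ u : ℤ, u ^ 2 = a.y ^ 2 ∧ 0 ≤ u := ⟨|a.y|, sq_abs _, abs_nonneg _⟩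
    rw [← hu] at hp
    have hu1 : 0 < u := by
      rcases hu0.eq_or_lt with h | h
      · rw [← h] at hp
        nlinarith
      · exact h
    rcases lt_or_ge u n with hlt | hge
    · -- `x ^ 2` lies strictly between the consecutive squares `(n u - 1) ^ 2` and `(n u) ^ 2`.
      have h1 : x < n * u := lt_of_pow_lt_pow_left₀ 2 (by positivity) (by nlinarith)
      have h2 : n * u - 1 < x := lt_of_pow_lt_pow_left₀ 2 (by linarith) (by nlinarith)
      omega
    · have h3 : n ^ 2 ≤ u ^ 2 := pow_le_pow_left₀ (by linarith) hge 2
      exact le_of_sq_le_sq (by nlinarith) (by linarith)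

theorem stmt_19 (n : ℤ) (hn : 2 ≤ n) (g : Matrix (Fin 2) (Fin 2) ℤ)
    (hiso : gᵀ * !![4, 2 * n; 2 * n, 2] * g = !![4, 2 * n; 2 * n, 2])
    (hdet : g.det = 1) :
    ∃ k : ℤ, g = (!![2 * n ^ 2 - 1, n; -2 * n, -1] : Matrix (Fin 2) (Fin 2) ℤ) ^ k ∨
      g = -(!![2 * n ^ 2 - 1, n; -2 * n, -1] : Matrix (Fin 2) (Fin 2) ℤ) ^ k := by
  have e00 := congrFun (congrFun hiso 0) 0
  have e01 := congrFun (congrFun hiso 0) 1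
  have e11 := congrFun (congrFun hiso 1) 1
  rw [Matrix.det_fin_two] at hdet
  simp [Matrix.mul_apply, Fin.sum_univ_two] at e00 e01 e11
  -- The two identities are the entries `(0, 0)` and `(0, 1)` of `Q g = (adj g)ᵀ Q`, rearranged.
  have hd : 4 * g 1 1 = 4 * (g 0 0 + n * g 1 0) := by
    linear_combination -g 1 1 * e00 + g 1 0 * e01 + (4 * g 0 0 + 2 * n * g 1 0) * hdet
  have hc : 2 * g 1 0 = 2 * (-2 * g 0 1) := by
    linear_combination g 1 1 * e01 - g 1 0 * e11 - (4 * g 0 1 + 2 * n * g 1 1) * hdet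
  have hc' : g 1 0 = -2 * g 0 1 := by linarith
  have hd' : g 1 1 = g 0 0 - 2 * n * g 0 1 := by
    rw [hc'] at hd
    linarith
  let a : Pell.Solution₁ (n ^ 2 - 2) := Pell.Solution₁.mk (g 0 0 - n * g 0 1) (g 0 1) (by
    rw [hc', hd'] at hdet
    linear_combination hdet)
  have hg : g = pellToMatrix n a := by
    ext i j
    fin_cases i <;> fin_cases j <;> simp [pellToMatrix_apply, a, hc', hd'] <;> ring
  obtain ⟨k, hk⟩ := (pellGen_isFundamental n hn).eq_zpow_or_neg_zpow a
  refine ⟨k, ?_⟩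
  rw [hg, ← pellToMatrix_pellGen, ← pellToMatrix_zpow, ← pellToMatrix_neg]
  exact hk.imp (congrArg _) (congrArg _)
end
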